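/- arXiv:2602.17233 — 8 statements merged into one kernel-verified Lean document; each statement's English description precedes it below -/
import Mathlib

section
/- Let n, ν ∈ ℝ³ be unit vectors, let s₀, s₁, s₂ ∈ ℝ, and set Q := s₀ (n nᵀ − (1/3) I₃). Then f_S(Q) = s₁ s₀² (n ⋅ ν)². In particular, if s₁ > 0 and s₀ ≠ 0, then f_S(Q) = 0 if and only if n ⋅ ν = 0. -/
open Matrix

/-- Frobenius norm of a real 3×3 matrix: `‖A‖ = √(tr(Aᵀ A))`. -/
noncomputable def frobNorm (A : Matrix (Fin 3) (Fin 3) ℝ) : ℝ :=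
  Real.sqrt (Matrix.trace (Aᵀ * A))

/-- Surface energy density `f_S(Q) = s₁ ‖Q^{(s₀)} − P Q^{(s₀)}‖² + s₂ (‖Q^{(s₀)}‖² − s₀²)²`,
where `Q^{(s₀)} = Q + (s₀/3) I₃` and `P = I₃ − ν νᵀ`. -/
noncomputable def fS (s₀ s₁ s₂ : ℝ) (ν : Fin 3 → ℝ) (Q : Matrix (Fin 3) (Fin 3) ℝ) : ℝ :=
  s₁ * frobNorm ((Q + (s₀ / 3) • (1 : Matrix (Fin 3) (Fin 3) ℝ)) -
      ((1 : Matrix (Fin 3) (Fin 3) ℝ) - vecMulVec ν ν) *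
        (Q + (s₀ / 3) • (1 : Matrix (Fin 3) (Fin 3) ℝ))) ^ 2 +
  s₂ * (frobNorm (Q + (s₀ / 3) • (1 : Matrix (Fin 3) (Fin 3) ℝ)) ^ 2 - s₀ ^ 2) ^ 2


theorem frobNorm_sq_aux (c : ℝ) (a b : Fin 3 → ℝ) :
    frobNorm (c • vecMulVec a b) ^ 2 = c ^ 2 * (a ⬝ᵥ a) * (b ⬝ᵥ b) := by
  have h : Matrix.trace ((c • vecMulVec a b)ᵀ * (c • vecMulVec a b))
      = c ^ 2 * (a ⬝ᵥ a) * (b ⬝ᵥ b) := by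
    simp [Matrix.trace, Matrix.mul_apply, vecMulVec_apply, dotProduct, Fin.sum_univ_three]
    ring
  have h0 : 0 ≤ c ^ 2 * (a ⬝ᵥ a) * (b ⬝ᵥ b) := by
    simp only [dotProduct, Fin.sum_univ_three, ← pow_two]
    positivity
  rw [frobNorm, h, Real.sq_sqrt h0]

theorem stmt_1 (n ν : Fin 3 → ℝ) (hn : n ⬝ᵥ n = 1) (hν : ν ⬝ᵥ ν = 1) (s₀ s₁ s₂ : ℝ)
    (Q : Matrix (Fin 3) (Fin 3) ℝ)
    (hQ : Q = s₀ • (vecMulVec n n - (1 / 3 : ℝ) • (1 : Matrix (Fin 3) (Fin 3) ℝ))) :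
    fS s₀ s₁ s₂ ν Q = s₁ * s₀ ^ 2 * (n ⬝ᵥ ν) ^ 2 ∧
      (0 < s₁ → s₀ ≠ 0 → (fS s₀ s₁ s₂ ν Q = 0 ↔ n ⬝ᵥ ν = 0)) := by
  have h1 : Q + (s₀ / 3) • (1 : Matrix (Fin 3) (Fin 3) ℝ) = s₀ • vecMulVec n n := by
    rw [hQ, smul_sub, smul_smul, mul_one_div, sub_add_cancel]
  have h2 : s₀ • vecMulVec n n - ((1 : Matrix (Fin 3) (Fin 3) ℝ) - vecMulVec ν ν) *
      (s₀ • vecMulVec n n) = (s₀ * (n ⬝ᵥ ν)) • vecMulVec ν n := by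
    rw [sub_mul, one_mul, sub_sub_cancel]
    ext i j
    simp [Matrix.mul_apply, vecMulVec_apply, dotProduct, Fin.sum_univ_three]
    ring
  have key : fS s₀ s₁ s₂ ν Q = s₁ * s₀ ^ 2 * (n ⬝ᵥ ν) ^ 2 := by
    rw [fS, h1, h2, frobNorm_sq_aux, frobNorm_sq_aux, hn, hν]
    ring
  refine ⟨key, fun hs h0 => ?_⟩
  rw [key]
  simp [hs.ne', h0]
end

section
/- Let s₀, s₁, s₂ ∈ ℝ, let k₁ > 0, let ν ∈ ℝ³ be a unit vector, and let Q be a real symmetric traceless 3×3 matrix with ‖Q‖ > k₁. Set Q̃ := (k₁/‖Q‖) Q. Then f_S(Q) − f_S(Q̃) = (‖Q‖ − k₁) · [ s₁ ( (‖Q‖ + k₁) ‖Qν‖²/‖Q‖² + (2/3) s₀ (νᵀQν)/‖Q‖ ) + s₂ (‖Q‖ + k₁)(‖Q‖² + k₁² − (4/3) s₀²) ]. -/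
open Matrix

lemma frob_sq (A : Matrix (Fin 3) (Fin 3) ℝ) : frobNorm A ^ 2 = Matrix.trace (Aᵀ * A) := by
  unfold frobNorm
  apply Real.sq_sqrt
  simp only [Matrix.trace, Matrix.diag, Matrix.mul_apply, Matrix.transpose_apply]
  exact Finset.sum_nonneg fun i _ => Finset.sum_nonneg fun j _ => mul_self_nonneg _

lemma frob_proj (ν : Fin 3 → ℝ) (hν : ν ⬝ᵥ ν = 1) (A : Matrix (Fin 3) (Fin 3) ℝ)
    (hA : Aᵀ = A) :
    frobNorm (A - ((1 : Matrix (Fin 3) (Fin 3) ℝ) - vecMulVec ν ν) * A) ^ 2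
      = (A.mulVec ν) ⬝ᵥ (A.mulVec ν) := by
  have h1 : A - ((1 : Matrix (Fin 3) (Fin 3) ℝ) - vecMulVec ν ν) * A
      = vecMulVec ν (A.mulVec ν) := by
    rw [sub_mul, one_mul, sub_sub_cancel, Matrix.vecMulVec_mul, ← Matrix.mulVec_transpose, hA]
  rw [frob_sq, h1, Matrix.transpose_vecMulVec, Matrix.vecMulVec_mul_vecMulVec, hν]
  simp [Matrix.trace_vecMulVec]

lemma fS_eq (s₀ s₁ s₂ : ℝ) (ν : Fin 3 → ℝ) (hν : ν ⬝ᵥ ν = 1)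
    (Q : Matrix (Fin 3) (Fin 3) ℝ) (hsymm : Qᵀ = Q) (htrace : Matrix.trace Q = 0) :
    fS s₀ s₁ s₂ ν Q = s₁ * ((Q.mulVec ν) ⬝ᵥ (Q.mulVec ν) + 2 / 3 * s₀ * (ν ⬝ᵥ Q.mulVec ν)
      + s₀ ^ 2 / 9) + s₂ * (frobNorm Q ^ 2 - 2 / 3 * s₀ ^ 2) ^ 2 := by
  unfold fS
  rw [frob_proj ν hν _ (by simp [hsymm])]
  have h2 : frobNorm (Q + (s₀ / 3) • (1 : Matrix (Fin 3) (Fin 3) ℝ)) ^ 2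
      = frobNorm Q ^ 2 + s₀ ^ 2 / 3 := by
    rw [frob_sq, frob_sq]
    simp [hsymm, add_mul, mul_add, htrace]
    ring
  rw [h2]
  simp only [Matrix.add_mulVec, Matrix.smul_mulVec, Matrix.one_mulVec, add_dotProduct,
    dotProduct_add, smul_dotProduct, dotProduct_smul, hν, smul_eq_mul]
  rw [dotProduct_comm (Q.mulVec ν) ν]
  ring

theorem stmt_2 (s₀ s₁ s₂ k₁ : ℝ) (hk₁ : 0 < k₁) (ν : Fin 3 → ℝ) (hν : ν ⬝ᵥ ν = 1)
    (Q : Matrix (Fin 3) (Fin 3) ℝ) (hsymm : Qᵀ = Q) (htrace : Matrix.trace Q = 0)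
    (hbig : k₁ < frobNorm Q) :
    fS s₀ s₁ s₂ ν Q - fS s₀ s₁ s₂ ν ((k₁ / frobNorm Q) • Q) =
      (frobNorm Q - k₁) *
        (s₁ * ((frobNorm Q + k₁) * ((Q.mulVec ν) ⬝ᵥ (Q.mulVec ν)) / frobNorm Q ^ 2 +
            (2 / 3) * s₀ * (ν ⬝ᵥ Q.mulVec ν) / frobNorm Q) +
          s₂ * (frobNorm Q + k₁) * (frobNorm Q ^ 2 + k₁ ^ 2 - (4 / 3) * s₀ ^ 2)) := by
  have hN : 0 < frobNorm Q := hk₁.trans hbig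
  rw [fS_eq _ _ _ _ hν Q hsymm htrace, fS_eq _ _ _ _ hν _ (by simp [hsymm]) (by simp [htrace])]
  have h3 : frobNorm ((k₁ / frobNorm Q) • Q) ^ 2 = k₁ ^ 2 := by
    have h := frob_sq Q
    rw [frob_sq]
    simp only [Matrix.transpose_smul, Matrix.smul_mul, Matrix.mul_smul, Matrix.trace_smul,
      smul_eq_mul, ← h]
    field_simp
  rw [h3]
  simp only [Matrix.smul_mulVec, smul_dotProduct, dotProduct_smul, smul_eq_mul]
  field_simp
  ring
end

section
/- For all real parameters s₀, s₁, s₂ > 0 there exists k₁ > 0 such that for every unit vector ν ∈ ℝ³ and every real symmetric traceless 3×3 matrix Q with ‖Q‖ > k₁, one has f_S(Q) > f_S( (k₁/‖Q‖) Q ). -/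
open Matrix

lemma frobNorm_sq (A : Matrix (Fin 3) (Fin 3) ℝ) : frobNorm A ^ 2 = ∑ i, ∑ j, A i j ^ 2 := by
  have h : Matrix.trace (Aᵀ * A) = ∑ i, ∑ j, A i j ^ 2 := by
    simp [Matrix.trace, Matrix.mul_apply, Fin.sum_univ_three]
    ring
  unfold frobNorm
  rw [Real.sq_sqrt, h]
  rw [h]
  positivity

lemma frob_first (X : Matrix (Fin 3) (Fin 3) ℝ) (ν : Fin 3 → ℝ) (hν : ν ⬝ᵥ ν = 1) :
    frobNorm (X - ((1 : Matrix (Fin 3) (Fin 3) ℝ) - vecMulVec ν ν) * X) ^ 2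
      = ∑ j, (∑ i, ν i * X i j) ^ 2 := by
  have h : X - ((1 : Matrix (Fin 3) (Fin 3) ℝ) - vecMulVec ν ν) * X
      = vecMulVec ν (fun j => ∑ i, ν i * X i j) := by
    rw [Matrix.sub_mul, Matrix.one_mul, sub_sub_cancel]
    ext i j
    simp [Matrix.mul_apply, vecMulVec_apply, Fin.sum_univ_three]
    ring
  rw [h, frobNorm_sq]
  simp only [vecMulVec_apply, mul_pow, ← Finset.mul_sum]
  rw [← Finset.sum_mul]
  have : ∑ i, ν i ^ 2 = 1 := by
    rw [← hν]; simp [dotProduct, sq]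
  rw [this, one_mul]

lemma fS_formula (s₀ s₁ s₂ : ℝ) (ν : Fin 3 → ℝ) (hν : ν ⬝ᵥ ν = 1)
    (Q : Matrix (Fin 3) (Fin 3) ℝ) (hT : Matrix.trace Q = 0) :
    fS s₀ s₁ s₂ ν Q = s₁ * (∑ j, (∑ i, ν i * Q i j) ^ 2
      + 2 * s₀ / 3 * ∑ j, (∑ i, ν i * Q i j) * ν j + s₀ ^ 2 / 9)
      + s₂ * (frobNorm Q ^ 2 - 2 * s₀ ^ 2 / 3) ^ 2 := by
  unfold fS
  rw [frob_first _ _ hν, frobNorm_sq, frobNorm_sq]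
  simp [dotProduct, Matrix.trace, Fin.sum_univ_three, Matrix.one_apply] at *
  congr 2
  · linear_combination s₀ ^ 2 / 9 * hν
  · congr 1
    linear_combination (2 * s₀ / 3) * hT

lemma b_sq_le (w ν : Fin 3 → ℝ) (hν : ν ⬝ᵥ ν = 1) :
    (∑ j, w j * ν j) ^ 2 ≤ ∑ j, w j ^ 2 := by
  have h := Finset.sum_mul_sq_le_sq_mul_sq Finset.univ w ν
  have : ∑ i, ν i ^ 2 = 1 := by
    rw [← hν]; simp [dotProduct, sq]
  rwa [this, mul_one] at h

lemma frobNorm_smul_sq (t : ℝ) (Q : Matrix (Fin 3) (Fin 3) ℝ) :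
    frobNorm (t • Q) ^ 2 = t ^ 2 * frobNorm Q ^ 2 := by
  simp only [frobNorm_sq, Matrix.smul_apply, smul_eq_mul, mul_pow, Finset.mul_sum]

theorem stmt_3 (s₀ s₁ s₂ : ℝ) (hs₀ : 0 < s₀) (hs₁ : 0 < s₁) (hs₂ : 0 < s₂) :
    ∃ k₁ : ℝ, 0 < k₁ ∧ ∀ ν : Fin 3 → ℝ, ν ⬝ᵥ ν = 1 →
      ∀ Q : Matrix (Fin 3) (Fin 3) ℝ, Qᵀ = Q → Matrix.trace Q = 0 → k₁ < frobNorm Q →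
        fS s₀ s₁ s₂ ν ((k₁ / frobNorm Q) • Q) < fS s₀ s₁ s₂ ν Q := by
  have hM : 0 < s₀ ^ 2 * s₁ / s₂ := by positivity
  obtain ⟨M, hMdef⟩ : ∃ M, M = s₀ ^ 2 * s₁ / s₂ := ⟨_, rfl⟩
  rw [← hMdef] at hM
  have hMs : M * s₂ = s₀ ^ 2 * s₁ := by rw [hMdef]; field_simp
  refine ⟨1 + 2 * s₀ + M, by positivity, ?_⟩
  intro ν hν Q _ hT hk
  obtain ⟨k, hkdef⟩ : ∃ k, k = 1 + 2 * s₀ + M := ⟨_, rfl⟩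
  rw [← hkdef] at hk ⊢
  have hk0 : 0 < k := by rw [hkdef]; positivity
  have hk2 : 1 + 4 * s₀ ^ 2 + M ≤ k ^ 2 := by
    rw [hkdef]; nlinarith [mul_pos hs₀ hM, sq_nonneg M]
  rw [fS_formula _ _ _ _ hν _ hT, fS_formula _ _ _ _ hν _ (by rw [Matrix.trace_smul, hT, smul_zero]),
    frobNorm_smul_sq]
  have hab := b_sq_le (fun j => ∑ i, ν i * Q i j) ν hν
  obtain ⟨q, hq⟩ : ∃ q, q = frobNorm Q := ⟨_, rfl⟩
  rw [← hq] at hk ⊢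
  have hq0 : 0 < q := hk0.trans hk
  obtain ⟨t, ht⟩ : ∃ t, t = k / q := ⟨_, rfl⟩
  have htq : t * q = k := by rw [ht]; field_simp
  have ht0 : 0 < t := by rw [ht]; positivity
  have ht1 : t < 1 := by rw [ht, div_lt_one hq0]; exact hk
  rw [← ht]
  have e1 : ∑ j, (∑ i, ν i * (t • Q) i j) ^ 2 = t ^ 2 * ∑ j, (∑ i, ν i * Q i j) ^ 2 := by
    simp [Fin.sum_univ_three]; ring
  have e2 : ∑ j, (∑ i, ν i * (t • Q) i j) * ν j = t * ∑ j, (∑ i, ν i * Q i j) * ν j := by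
    simp [Fin.sum_univ_three]; ring
  rw [e1, e2]
  generalize (∑ j, (∑ i, ν i * Q i j) * ν j) = b at *
  generalize (∑ j, (∑ i, ν i * Q i j) ^ 2) = a at *
  have ha : 0 ≤ a := (sq_nonneg b).trans hab
  have h1 : -(s₀ ^ 2 / 9) ≤ (1 + t) * a + 2 * s₀ / 3 * b := by
    nlinarith [sq_nonneg (b + s₀ / 3), mul_nonneg ht0.le ha]
  have hqk : k ^ 2 ≤ q ^ 2 := by gcongr
  have hq1 : 1 ≤ q ^ 2 := by nlinarith [sq_nonneg s₀]
  have hD : M ≤ q ^ 2 + k ^ 2 - 4 * s₀ ^ 2 / 3 := by nlinarith [sq_nonneg s₀]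
  have h2 : M ≤ (1 + t) * q ^ 2 * (q ^ 2 + k ^ 2 - 4 * s₀ ^ 2 / 3) := by
    have : 1 ≤ (1 + t) * q ^ 2 := by nlinarith
    nlinarith
  have h3 : 0 < s₁ * ((1 + t) * a + 2 * s₀ / 3 * b)
      + s₂ * ((1 + t) * q ^ 2 * (q ^ 2 + k ^ 2 - 4 * s₀ ^ 2 / 3)) := by
    have := mul_le_mul_of_nonneg_left h1 hs₁.le
    have := mul_le_mul_of_nonneg_left h2 hs₂.le
    have : 0 < s₀ ^ 2 * s₁ := by positivity
    nlinarith
  have h4 := mul_pos (sub_pos.2 ht1) h3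
  rw [← htq] at h4
  linear_combination h4
end

section
/- Let m ≥ 1, ρ > 0, q ∈ ℝᵐ, and let u : ℝ² → ℝᵐ be harmonic on an open set containing the closed disk of radius ρ centered at the origin. Then ( ∫_{D_ρ} ‖Du(x)‖²_HS dx )² ≤ [ (1/ρ) ∫₀^{2π} ‖(d/dθ) u(ρ cos θ, ρ sin θ)‖² dθ ] · [ ρ ∫₀^{2π} ‖u(ρ cos θ, ρ sin θ) − q‖² dθ ]. -/
open MeasureTheory

/-- The point `(ρ cos θ, ρ sin θ)` of the circle of radius `ρ` in `ℝ²`. -/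
noncomputable def circlePt (ρ θ : ℝ) : EuclideanSpace ℝ (Fin 2) :=
  EuclideanSpace.single 0 (ρ * Real.cos θ) + EuclideanSpace.single 1 (ρ * Real.sin θ)

lemma norm_circlePt (r θ : ℝ) : ‖circlePt r θ‖ = |r| := by
  rw [EuclideanSpace.norm_eq, ← Real.sqrt_sq_eq_abs]
  congr 1
  simp [circlePt, Fin.sum_univ_two]
  have := Real.cos_sq_add_sin_sq θ
  linear_combination r ^ 2 * this

lemma contDiff_circlePt : ContDiff ℝ ⊤ (fun p : ℝ × ℝ => circlePt p.1 p.2) := by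
  unfold circlePt
  rw [contDiff_euclidean]
  intro i
  fin_cases i
  · simp; fun_prop
  · simp; fun_prop

lemma polar_ball (ρ : ℝ) (hρ : 0 < ρ) (h : EuclideanSpace ℝ (Fin 2) → ℝ)
    (hc : ContinuousOn h (Metric.closedBall 0 ρ)) :
    ∫ x in Metric.ball 0 ρ, h x =
      ∫ r in (0:ℝ)..ρ, ∫ θ in (-Real.pi)..Real.pi, r * h (circlePt r θ) := by
  have hint : IntegrableOn (fun p : ℝ × ℝ => p.1 * h (circlePt p.1 p.2))
      (Set.Icc 0 ρ ×ˢ Set.Icc (-Real.pi) Real.pi) := by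
    apply ContinuousOn.integrableOn_compact (isCompact_Icc.prod isCompact_Icc)
    apply continuousOn_fst.mul
    refine hc.comp contDiff_circlePt.continuous.continuousOn ?_
    intro p hp
    simp only [Metric.mem_closedBall, dist_zero_right, norm_circlePt]
    rw [abs_of_nonneg hp.1.1]; exact hp.1.2
  have hmp : MeasurePreserving
      ((MeasurableEquiv.toLp 2 (Fin 2 → ℝ)) ∘ (MeasurableEquiv.finTwoArrow (α := ℝ)).symm) := 
    (EuclideanSpace.volume_preserving_symm_measurableEquiv_toLp (Fin 2)).symm.comp
      (volume_preserving_finTwoArrow ℝ).symm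
  rw [← integral_indicator Metric.isOpen_ball.measurableSet,
    ← hmp.integral_comp ((MeasurableEquiv.toLp 2 (Fin 2 → ℝ)).measurableEmbedding.comp
      (MeasurableEquiv.finTwoArrow (α := ℝ)).symm.measurableEmbedding),
    ← integral_comp_polarCoord_symm]
  have e1 : ∀ p : ℝ × ℝ, ((MeasurableEquiv.toLp 2 (Fin 2 → ℝ)) ∘
      (MeasurableEquiv.finTwoArrow (α := ℝ)).symm) (polarCoord.symm p) = circlePt p.1 p.2 := by
    intro p
    ext i
    fin_cases i <;> simp [circlePt, MeasurableEquiv.finTwoArrow]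
  simp_rw [e1]
  have e2 : ∀ p ∈ polarCoord.target, p.1 • (Metric.ball 0 ρ).indicator h (circlePt p.1 p.2) =
      (Set.Iio ρ ×ˢ Set.univ).indicator (fun p : ℝ × ℝ => p.1 * h (circlePt p.1 p.2)) p := by
    intro p hp
    have h0 : 0 < p.1 := hp.1
    by_cases hh : p.1 < ρ
    · rw [Set.indicator_of_mem, Set.indicator_of_mem]
      · rfl
      · simp [hh]
      · simp [norm_circlePt, abs_of_pos h0, hh]
    · rw [Set.indicator_of_notMem, Set.indicator_of_notMem]
      · simp
      · simp [hh]
      · simpa [norm_circlePt, abs_of_pos h0] using hh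
  rw [setIntegral_congr_fun polarCoord.open_target.measurableSet e2,
    setIntegral_indicator (measurableSet_Iio.prod MeasurableSet.univ)]
  have e3 : polarCoord.target ∩ Set.Iio ρ ×ˢ Set.univ = Set.Ioo 0 ρ ×ˢ Set.Ioo (-Real.pi) Real.pi := by
    ext p; simp [polarCoord_target]; tauto
  rw [e3, Measure.volume_eq_prod, setIntegral_prod]
  · rw [intervalIntegral.integral_of_le hρ.le, integral_Ioc_eq_integral_Ioo]
    congr 1; ext r
    rw [intervalIntegral.integral_of_le (by linarith [Real.pi_pos]), integral_Ioc_eq_integral_Ioo]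
  · exact hint.mono_set (Set.prod_mono Set.Ioo_subset_Icc_self Set.Ioo_subset_Icc_self)

lemma hasFDerivAt_comp_circlePt {X : EuclideanSpace ℝ (Fin 2) → ℝ} (p : ℝ × ℝ)
    (hX : DifferentiableAt ℝ X (circlePt p.1 p.2)) :
    ∃ L : ℝ × ℝ →L[ℝ] ℝ, HasFDerivAt (fun p : ℝ × ℝ => X (circlePt p.1 p.2)) L p ∧
      L (1, 0) = Real.cos p.2 * fderiv ℝ X (circlePt p.1 p.2) (EuclideanSpace.single 0 1)
        + Real.sin p.2 * fderiv ℝ X (circlePt p.1 p.2) (EuclideanSpace.single 1 1) ∧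
      L (0, 1) = -(p.1 * Real.sin p.2) * fderiv ℝ X (circlePt p.1 p.2) (EuclideanSpace.single 0 1)
        + p.1 * Real.cos p.2 * fderiv ℝ X (circlePt p.1 p.2) (EuclideanSpace.single 1 1) := by
  have e : (fun p : ℝ × ℝ => circlePt p.1 p.2) = fun p : ℝ × ℝ => 
      (p.1 * Real.cos p.2) • (EuclideanSpace.single 0 1 : EuclideanSpace ℝ (Fin 2))
       + (p.1 * Real.sin p.2) • (EuclideanSpace.single 1 1 : EuclideanSpace ℝ (Fin 2)) := by
    ext p i; fin_cases i <;> simp [circlePt]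
  have h1 := ((hasFDerivAt_fst (𝕜 := ℝ) (p := p)).mul ((Real.hasDerivAt_cos p.2).comp_hasFDerivAt p 
    (hasFDerivAt_snd (𝕜 := ℝ)))).smul_const (EuclideanSpace.single 0 1 : EuclideanSpace ℝ (Fin 2))
  have h2 := ((hasFDerivAt_fst (𝕜 := ℝ) (p := p)).mul ((Real.hasDerivAt_sin p.2).comp_hasFDerivAt p 
    (hasFDerivAt_snd (𝕜 := ℝ)))).smul_const (EuclideanSpace.single 1 1 : EuclideanSpace ℝ (Fin 2))
  have h3 := h1.add h2
  refine ⟨_, HasFDerivAt.comp p (g := X) (f := fun p : ℝ × ℝ => circlePt p.1 p.2) hX.hasFDerivAt (h3.congr_of_eventuallyEq (Filter.Eventually.of_forall fun p => congrFun e p)), ?_, ?_⟩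
  · simp [smul_smul]
  · simp [smul_smul]

lemma div_disk (ρ : ℝ) (hρ : 0 < ρ) (U : Set (EuclideanSpace ℝ (Fin 2))) (hU : IsOpen U)
    (hUball : Metric.closedBall (0 : EuclideanSpace ℝ (Fin 2)) ρ ⊆ U)
    (X Y : EuclideanSpace ℝ (Fin 2) → ℝ) (hX : ContDiffOn ℝ 1 X U) (hY : ContDiffOn ℝ 1 Y U) :
    ∫ x in Metric.ball 0 ρ, (fderiv ℝ X x (EuclideanSpace.single 0 1)
        + fderiv ℝ Y x (EuclideanSpace.single 1 1)) =
      ∫ θ in (0:ℝ)..(2 * Real.pi), ρ * (Real.cos θ * X (circlePt ρ θ) + Real.sin θ * Y (circlePt ρ θ)) := by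
  have hdX : ContinuousOn (fun x => fderiv ℝ X x (EuclideanSpace.single 0 1)) U :=
    (hX.continuousOn_fderiv_of_isOpen hU le_rfl).clm_apply continuousOn_const
  have hdY : ContinuousOn (fun x => fderiv ℝ Y x (EuclideanSpace.single 1 1)) U :=
    (hY.continuousOn_fderiv_of_isOpen hU le_rfl).clm_apply continuousOn_const
  have hmem : ∀ p ∈ Set.uIcc 0 ρ ×ˢ Set.uIcc (-Real.pi) Real.pi, circlePt p.1 p.2 ∈ Metric.closedBall 0 ρ := by
    intro p hp
    rw [Set.uIcc_of_le hρ.le] at hp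
    simp only [Metric.mem_closedBall, dist_zero_right, norm_circlePt]
    rw [abs_of_nonneg hp.1.1]; exact hp.1.2
  have hcc : ContinuousOn (fun p : ℝ × ℝ => circlePt p.1 p.2) (Set.uIcc 0 ρ ×ˢ Set.uIcc (-Real.pi) Real.pi) :=
    contDiff_circlePt.continuous.continuousOn
  have hXc := hX.continuousOn.comp hcc (fun p hp => hUball (hmem p hp))
  have hYc := hY.continuousOn.comp hcc (fun p hp => hUball (hmem p hp))
  have hdXc := hdX.comp hcc (fun p hp => hUball (hmem p hp))
  have hdYc := hdY.comp hcc (fun p hp => hUball (hmem p hp))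
  simp only [Function.comp_def] at hXc hYc hdXc hdYc
  rw [polar_ball ρ hρ (fun x => fderiv ℝ X x (EuclideanSpace.single 0 1)
        + fderiv ℝ Y x (EuclideanSpace.single 1 1)) ((hdX.add hdY).mono hUball)]
  set f : ℝ × ℝ → ℝ := fun p => p.1 * (Real.cos p.2 * X (circlePt p.1 p.2)
    + Real.sin p.2 * Y (circlePt p.1 p.2)) with hf
  set g : ℝ × ℝ → ℝ := fun p => Real.cos p.2 * Y (circlePt p.1 p.2)
    - Real.sin p.2 * X (circlePt p.1 p.2) with hg
  have key : ∀ p ∈ Set.uIcc 0 ρ ×ˢ Set.uIcc (-Real.pi) Real.pi,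
      DifferentiableAt ℝ f p ∧ DifferentiableAt ℝ g p ∧
      fderiv ℝ f p (1, 0) + fderiv ℝ g p (0, 1) =
        p.1 * (fderiv ℝ X (circlePt p.1 p.2) (EuclideanSpace.single 0 1)
        + fderiv ℝ Y (circlePt p.1 p.2) (EuclideanSpace.single 1 1)) := by
    intro p hp
    have hx := hUball (hmem p hp)
    obtain ⟨L, hL, L1, L2⟩ := hasFDerivAt_comp_circlePt p
      ((hX.contDiffAt (hU.mem_nhds hx)).differentiableAt one_ne_zero)
    obtain ⟨M, hM, M1, M2⟩ := hasFDerivAt_comp_circlePt p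
      ((hY.contDiffAt (hU.mem_nhds hx)).differentiableAt one_ne_zero)
    have hcos := (Real.hasDerivAt_cos p.2).comp_hasFDerivAt p (hasFDerivAt_snd (𝕜 := ℝ))
    have hsin := (Real.hasDerivAt_sin p.2).comp_hasFDerivAt p (hasFDerivAt_snd (𝕜 := ℝ))
    have hF : HasFDerivAt f _ p :=
      (hasFDerivAt_fst (𝕜 := ℝ) (p := p)).mul ((hcos.mul hL).add (hsin.mul hM))
    have hG : HasFDerivAt g _ p := (hcos.mul hM).sub (hsin.mul hL)
    refine ⟨hF.differentiableAt, hG.differentiableAt, ?_⟩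
    rw [hF.fderiv, hG.fderiv]
    simp [L1, L2, M1, M2]
    have := Real.cos_sq_add_sin_sq p.2
    linear_combination (p.1 * (fderiv ℝ X (circlePt p.1 p.2) (EuclideanSpace.single 0 1)
        + fderiv ℝ Y (circlePt p.1 p.2) (EuclideanSpace.single 1 1))) * this
  have hcosc : ContinuousOn (fun p : ℝ × ℝ => Real.cos p.2) (Set.uIcc 0 ρ ×ˢ Set.uIcc (-Real.pi) Real.pi) :=
    by fun_prop
  have hsinc : ContinuousOn (fun p : ℝ × ℝ => Real.sin p.2) (Set.uIcc 0 ρ ×ˢ Set.uIcc (-Real.pi) Real.pi) :=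
    by fun_prop
  have D := integral2_divergence_prod_of_hasFDerivAt f g (fderiv ℝ f) (fderiv ℝ g) 0 (-Real.pi) ρ Real.pi
    (continuousOn_fst.mul ((hcosc.mul hXc).add (hsinc.mul hYc)))
    ((hcosc.mul hYc).sub (hsinc.mul hXc))
    (fun p hp => (key p ⟨Set.Ioo_subset_Icc_self hp.1, Set.Ioo_subset_Icc_self hp.2⟩).1.hasFDerivAt)
    (fun p hp => (key p ⟨Set.Ioo_subset_Icc_self hp.1, Set.Ioo_subset_Icc_self hp.2⟩).2.1.hasFDerivAt)
    (by
      apply ContinuousOn.integrableOn_compact (isCompact_uIcc.prod isCompact_uIcc)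
      exact (continuousOn_fst.mul (hdXc.add hdYc)).congr (fun p hp => (key p hp).2.2))
  have eL : (∫ r in (0:ℝ)..ρ, ∫ θ in (-Real.pi)..Real.pi, r *
      (fderiv ℝ X (circlePt r θ) (EuclideanSpace.single 0 1)
        + fderiv ℝ Y (circlePt r θ) (EuclideanSpace.single 1 1))) =
      ∫ r in (0:ℝ)..ρ, ∫ θ in (-Real.pi)..Real.pi, fderiv ℝ f (r, θ) (1, 0) + fderiv ℝ g (r, θ) (0, 1) := by
    refine intervalIntegral.integral_congr fun r hr => ?_
    refine intervalIntegral.integral_congr fun θ hθ => ?_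
    exact (key (r, θ) ⟨hr, hθ⟩).2.2.symm
  rw [eL, D]
  have hper : Function.Periodic (fun θ => f (ρ, θ)) (2 * Real.pi) := by
    intro θ; simp [hf, circlePt]
  have := hper.intervalIntegral_add_eq (-Real.pi) 0
  rw [show -Real.pi + 2 * Real.pi = Real.pi by ring, zero_add] at this
  rw [this]
  simp [hg, hf, circlePt]

lemma cs_interval {m : ℕ} (a b : ℝ → EuclideanSpace ℝ (Fin m)) (ha : Continuous a)
    (hb : Continuous b) :
    (∫ θ in (0:ℝ)..(2 * Real.pi), inner ℝ (a θ) (b θ)) ^ 2 ≤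
      (∫ θ in (0:ℝ)..(2 * Real.pi), ‖a θ‖ ^ 2) * ∫ θ in (0:ℝ)..(2 * Real.pi), ‖b θ‖ ^ 2 := by
  set P := ∫ θ in (0:ℝ)..(2 * Real.pi), ‖a θ‖ ^ 2 with hP
  set Q := ∫ θ in (0:ℝ)..(2 * Real.pi), inner ℝ (a θ) (b θ) with hQ
  set R := ∫ θ in (0:ℝ)..(2 * Real.pi), ‖b θ‖ ^ 2 with hR
  have h : ∀ t : ℝ, 0 ≤ P * (t * t) + (2 * Q) * t + R := by
    intro t
    have h1 : 0 ≤ ∫ θ in (0:ℝ)..(2 * Real.pi), ‖t • a θ + b θ‖ ^ 2 :=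
      intervalIntegral.integral_nonneg (by positivity) (fun _ _ => by positivity)
    have e : ∀ θ, ‖t • a θ + b θ‖ ^ 2 = (t * t) * ‖a θ‖ ^ 2 + (2 * t) * inner ℝ (a θ) (b θ)
        + ‖b θ‖ ^ 2 := by
      intro θ
      rw [norm_add_sq_real, norm_smul, real_inner_smul_left, mul_pow, Real.norm_eq_abs, sq_abs]
      ring
    simp_rw [e] at h1
    have i1 : Continuous fun θ => (t * t) * ‖a θ‖ ^ 2 := by fun_prop
    have i2 : Continuous fun θ => (2 * t) * inner ℝ (a θ) (b θ) := by fun_prop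
    have i3 : Continuous fun θ => ‖b θ‖ ^ 2 := by fun_prop
    have i4 : Continuous fun θ => (t * t) * ‖a θ‖ ^ 2 + (2 * t) * inner ℝ (a θ) (b θ) := i1.add i2
    rw [intervalIntegral.integral_add (i4.intervalIntegrable _ _) (i3.intervalIntegrable _ _),
      intervalIntegral.integral_add (i1.intervalIntegrable _ _) (i2.intervalIntegrable _ _),
      intervalIntegral.integral_const_mul, intervalIntegral.integral_const_mul] at h1
    linarith
  have := discrim_le_zero h
  unfold discrim at this
  nlinarith

theorem stmt_8 (m : ℕ) (hm : 1 ≤ m) (ρ : ℝ) (hρ : 0 < ρ) (q : EuclideanSpace ℝ (Fin m))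
    (U : Set (EuclideanSpace ℝ (Fin 2))) (hU : IsOpen U)
    (hUball : Metric.closedBall (0 : EuclideanSpace ℝ (Fin 2)) ρ ⊆ U)
    (u : EuclideanSpace ℝ (Fin 2) → EuclideanSpace ℝ (Fin m))
    (hu : ContDiffOn ℝ 2 u U)
    (hharm : ∀ x ∈ U,
      fderiv ℝ (fun y => fderiv ℝ u y (EuclideanSpace.single 0 1)) x
          (EuclideanSpace.single 0 1) +
        fderiv ℝ (fun y => fderiv ℝ u y (EuclideanSpace.single 1 1)) x
          (EuclideanSpace.single 1 1) = 0) :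
    (∫ x in Metric.ball (0 : EuclideanSpace ℝ (Fin 2)) ρ,
        ∑ i : Fin 2, ‖fderiv ℝ u x (EuclideanSpace.single i 1)‖ ^ 2) ^ 2 ≤
      ((1 / ρ) * ∫ θ in (0 : ℝ)..(2 * Real.pi),
          ‖deriv (fun t => u (circlePt ρ t)) θ‖ ^ 2) *
        (ρ * ∫ θ in (0 : ℝ)..(2 * Real.pi), ‖u (circlePt ρ θ) - q‖ ^ 2) := by
    classical
  set e0 : EuclideanSpace ℝ (Fin 2) := EuclideanSpace.single 0 1 with he0
  set e1 : EuclideanSpace ℝ (Fin 2) := EuclideanSpace.single 1 1 with he1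
  set A := fun y => fderiv ℝ u y e0 with hA
  set B := fun y => fderiv ℝ u y e1 with hB
  have hD : ContDiffOn ℝ 1 (fderiv ℝ u) U := hu.fderiv_of_isOpen hU (by norm_num)
  have hAc : ContDiffOn ℝ 1 A U := hD.clm_apply contDiffOn_const
  have hBc : ContDiffOn ℝ 1 B U := hD.clm_apply contDiffOn_const
  have hu1 : ContDiffOn ℝ 1 u U := hu.of_le (by norm_num)
  have dA : ∀ x ∈ U, DifferentiableAt ℝ A x := fun x hx =>
    (hAc.contDiffAt (hU.mem_nhds hx)).differentiableAt one_ne_zero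
  have dB : ∀ x ∈ U, DifferentiableAt ℝ B x := fun x hx =>
    (hBc.contDiffAt (hU.mem_nhds hx)).differentiableAt one_ne_zero
  have du : ∀ x ∈ U, DifferentiableAt ℝ u x := fun x hx =>
    (hu1.contDiffAt (hU.mem_nhds hx)).differentiableAt one_ne_zero
  have hsym : ∀ x ∈ U, fderiv ℝ A x e1 = fderiv ℝ B x e0 := by
    intro x hx
    have h1 : DifferentiableAt ℝ (fderiv ℝ u) x :=
      (hD.contDiffAt (hU.mem_nhds hx)).differentiableAt one_ne_zero
    have h2 : IsSymmSndFDerivAt ℝ u x :=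
      (hu.contDiffAt (hU.mem_nhds hx)).isSymmSndFDerivAt (by simp)
    rw [hA, hB, fderiv_clm_apply h1 (differentiableAt_const _),
      fderiv_clm_apply h1 (differentiableAt_const _)]
    simp
    exact h2 e1 e0
  have hmem : ∀ θ, circlePt ρ θ ∈ U := fun θ => hUball (by
    simp [norm_circlePt, abs_of_pos hρ])
  have hcpt : Continuous (fun θ => circlePt ρ θ) :=
    contDiff_circlePt.continuous.comp (by fun_prop : Continuous fun θ : ℝ => (ρ, θ))
  have cA : Continuous fun θ => A (circlePt ρ θ) := hAc.continuousOn.comp_continuous hcpt hmem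
  have cB : Continuous fun θ => B (circlePt ρ θ) := hBc.continuousOn.comp_continuous hcpt hmem
  have cu : Continuous fun θ => u (circlePt ρ θ) := hu.continuousOn.comp_continuous hcpt hmem
  set a : ℝ → EuclideanSpace ℝ (Fin m) := fun θ => u (circlePt ρ θ) - q with ha
  set b : ℝ → EuclideanSpace ℝ (Fin m) :=
    fun θ => Real.cos θ • A (circlePt ρ θ) + Real.sin θ • B (circlePt ρ θ) with hb
  set w : ℝ → EuclideanSpace ℝ (Fin m) :=
    fun θ => Real.cos θ • B (circlePt ρ θ) - Real.sin θ • A (circlePt ρ θ) with hw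
  have ca : Continuous a := cu.sub continuous_const
  have cb : Continuous b :=
    (Real.continuous_cos.smul cA).add (Real.continuous_sin.smul cB)
  have cw : Continuous w :=
    (Real.continuous_cos.smul cB).sub (Real.continuous_sin.smul cA)
  -- energy identity
  have E1 : (∫ x in Metric.ball (0 : EuclideanSpace ℝ (Fin 2)) ρ,
        ∑ i : Fin 2, ‖fderiv ℝ u x (EuclideanSpace.single i 1)‖ ^ 2) =
      ρ * ∫ θ in (0:ℝ)..(2 * Real.pi), inner ℝ (a θ) (b θ) := by
    have hd := div_disk ρ hρ U hU hUball (fun x => inner ℝ (u x - q) (A x))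
      (fun x => inner ℝ (u x - q) (B x))
      ((hu1.sub contDiffOn_const).inner ℝ hAc) ((hu1.sub contDiffOn_const).inner ℝ hBc)
    rw [← intervalIntegral.integral_const_mul]
    convert hd using 1
    · refine setIntegral_congr_fun Metric.isOpen_ball.measurableSet fun x hx => ?_
      have hx' := hUball (Metric.ball_subset_closedBall hx)
      have h0 := hharm x hx'
      simp only [Fin.sum_univ_two]
      rw [fderiv_inner_apply ℝ ((du x hx').sub_const q) (dA x hx'),
        fderiv_inner_apply ℝ ((du x hx').sub_const q) (dB x hx'), fderiv_sub_const]
      have h1 : inner ℝ (u x - q) (fderiv ℝ A x e0) + inner ℝ (u x - q) (fderiv ℝ B x e1) = 0 := by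
        rw [← inner_add_right, h0, inner_zero_right]
      have h2 : inner ℝ (fderiv ℝ u x e0) (A x) = ‖fderiv ℝ u x e0‖ ^ 2 :=
        real_inner_self_eq_norm_sq _
      have h3 : inner ℝ (fderiv ℝ u x e1) (B x) = ‖fderiv ℝ u x e1‖ ^ 2 :=
        real_inner_self_eq_norm_sq _
      linear_combination -h1 - h2 - h3
    · refine intervalIntegral.integral_congr fun θ _ => ?_
      simp [hb, ha, inner_add_right, real_inner_smul_right]
  -- Rellich identity
  have E2 : (∫ θ in (0:ℝ)..(2 * Real.pi), ‖w θ‖ ^ 2) = ∫ θ in (0:ℝ)..(2 * Real.pi), ‖b θ‖ ^ 2 := by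
    have c0 : ContDiff ℝ 1 (fun x : EuclideanSpace ℝ (Fin 2) => x 0) :=
      (EuclideanSpace.proj (𝕜 := ℝ) (0 : Fin 2)).contDiff
    have c1 : ContDiff ℝ 1 (fun x : EuclideanSpace ℝ (Fin 2) => x 1) :=
      (EuclideanSpace.proj (𝕜 := ℝ) (1 : Fin 2)).contDiff
    have hAA := hAc.inner ℝ hAc
    have hBB := hBc.inner ℝ hBc
    have hAB := hAc.inner ℝ hBc
    have hd := div_disk ρ hρ U hU hUball
      (fun x => x 0 * (inner ℝ (B x) (B x) - inner ℝ (A x) (A x)) - x 1 * (2 * inner ℝ (A x) (B x)))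
      (fun x => x 1 * (inner ℝ (A x) (A x) - inner ℝ (B x) (B x)) - x 0 * (2 * inner ℝ (A x) (B x)))
      ((c0.contDiffOn.mul (hBB.sub hAA)).sub (c1.contDiffOn.mul (contDiffOn_const.mul hAB)))
      ((c1.contDiffOn.mul (hAA.sub hBB)).sub (c0.contDiffOn.mul (contDiffOn_const.mul hAB)))
    rw [setIntegral_congr_fun (g := fun _ => (0:ℝ)) Metric.isOpen_ball.measurableSet] at hd
    · have e : ∀ θ, ρ * (Real.cos θ * (circlePt ρ θ 0 * (inner ℝ (B (circlePt ρ θ)) (B (circlePt ρ θ))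
            - inner ℝ (A (circlePt ρ θ)) (A (circlePt ρ θ)))
            - circlePt ρ θ 1 * (2 * inner ℝ (A (circlePt ρ θ)) (B (circlePt ρ θ)))) +
          Real.sin θ * (circlePt ρ θ 1 * (inner ℝ (A (circlePt ρ θ)) (A (circlePt ρ θ))
            - inner ℝ (B (circlePt ρ θ)) (B (circlePt ρ θ)))
            - circlePt ρ θ 0 * (2 * inner ℝ (A (circlePt ρ θ)) (B (circlePt ρ θ))))) =
          ρ ^ 2 * (‖w θ‖ ^ 2 - ‖b θ‖ ^ 2) := by
        intro θ
        have p0 : circlePt ρ θ 0 = ρ * Real.cos θ := by simp [circlePt]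
        have p1 : circlePt ρ θ 1 = ρ * Real.sin θ := by simp [circlePt]
        rw [p0, p1, ← real_inner_self_eq_norm_sq, ← real_inner_self_eq_norm_sq]
        simp only [hw, hb, inner_add_left, inner_add_right, inner_sub_left, inner_sub_right,
          real_inner_smul_left, real_inner_smul_right]
        rw [real_inner_comm (A (circlePt ρ θ)) (B (circlePt ρ θ))]
        ring
      simp_rw [e] at hd
      rw [intervalIntegral.integral_const_mul, intervalIntegral.integral_sub
        ((by fun_prop : Continuous fun θ => ‖w θ‖ ^ 2).intervalIntegrable _ _)
        ((by fun_prop : Continuous fun θ => ‖b θ‖ ^ 2).intervalIntegrable _ _)] at hd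
      simp only [integral_zero] at hd
      have := (mul_eq_zero.1 hd.symm).resolve_left (by positivity)
      linarith
    · intro x hx
      have hx' := hUball (Metric.ball_subset_closedBall hx)
      have h0 := hharm x hx'
      have hs := hsym x hx'
      have d0 : HasFDerivAt (fun x : EuclideanSpace ℝ (Fin 2) => x 0)
        (EuclideanSpace.proj (𝕜 := ℝ) (0 : Fin 2)) x := (EuclideanSpace.proj (𝕜 := ℝ) (0 : Fin 2)).hasFDerivAt
      have d1 : HasFDerivAt (fun x : EuclideanSpace ℝ (Fin 2) => x 1)
        (EuclideanSpace.proj (𝕜 := ℝ) (1 : Fin 2)) x := (EuclideanSpace.proj (𝕜 := ℝ) (1 : Fin 2)).hasFDerivAt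
      have dAA := ((dA x hx').inner ℝ (dA x hx')).hasFDerivAt
      have dBB := ((dB x hx').inner ℝ (dB x hx')).hasFDerivAt
      have dAB := ((dA x hx').inner ℝ (dB x hx')).hasFDerivAt
      have hx1 := (d0.mul (dBB.sub dAA)).sub (d1.mul (dAB.const_mul 2))
      have hy1 := (d1.mul (dAA.sub dBB)).sub (d0.mul (dAB.const_mul 2))
      have hx2 := congrArg (fun L => L e0) hx1.fderiv
      have hy2 := congrArg (fun L => L e1) hy1.fderiv
      refine (congrArg₂ (· + ·) hx2 hy2).trans ?_
      have hA0 : fderiv ℝ A x e0 = - fderiv ℝ B x e1 := eq_neg_of_add_eq_zero_left h0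
      have q00 : e0 0 = 1 := by simp [he0]
      have q01 : e0 1 = 0 := by simp [he0]
      have q10 : e1 0 = 0 := by simp [he1]
      have q11 : e1 1 = 1 := by simp [he1]
      simp [fderiv_inner_apply ℝ (dA x hx') (dA x hx'), fderiv_inner_apply ℝ (dB x hx') (dB x hx'),
        fderiv_inner_apply ℝ (dA x hx') (dB x hx'), hA0, hs, q00, q01, q10, q11,
        -inner_self_eq_norm_sq_to_K]
      rw [real_inner_comm (A x) (fderiv ℝ B x e1), real_inner_comm (A x) (fderiv ℝ B x e0),
        real_inner_comm (B x) (fderiv ℝ B x e1), real_inner_comm (B x) (fderiv ℝ B x e0)]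
      ring
  have E3 : ∀ θ, deriv (fun t => u (circlePt ρ t)) θ = ρ • w θ := by
    intro θ
    have e : (fun t => circlePt ρ t) = fun t => (ρ * Real.cos t) • e0 + (ρ * Real.sin t) • e1 := by
      ext t i; fin_cases i <;> simp [circlePt, he0, he1]
    have h1 : HasDerivAt (fun t => circlePt ρ t)
        ((ρ * -Real.sin θ) • e0 + (ρ * Real.cos θ) • e1) θ := by
      rw [e]
      exact (((Real.hasDerivAt_cos θ).const_mul ρ).smul_const e0).add
        (((Real.hasDerivAt_sin θ).const_mul ρ).smul_const e1)
    have h2 := ((du _ (hmem θ)).hasFDerivAt.comp_hasDerivAt θ h1).deriv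
    refine h2.trans ?_
    simp only [map_add, map_smul, hw, hA, hB]
    module
  rw [E1]
  simp_rw [E3, norm_smul, mul_pow, Real.norm_eq_abs, sq_abs]
  rw [intervalIntegral.integral_const_mul, E2]
  have := cs_interval a b ca cb
  calc _ = ρ ^ 2 * (∫ θ in (0:ℝ)..(2 * Real.pi), inner ℝ (a θ) (b θ)) ^ 2 := by ring
    _ ≤ ρ ^ 2 * _ := mul_le_mul_of_nonneg_left this (by positivity)
    _ = _ := by field_simp; exact mul_comm _ _
end

section
/- Let m, N ∈ ℕ with m ≥ 1, let a₀, a₁, …, a_N, b₁, …, b_N ∈ ℝᵐ, and let u be the associated harmonic polynomial. Then for every ρ > 0, ∫_{D_ρ} ‖Du(x)‖²_HS dx = π Σ_{n=1}^{N} n ρ^{2n} ( ‖aₙ‖² + ‖bₙ‖² ). -/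
open MeasureTheory

lemma ang_int (j k : ℕ) : ∫ θ in Set.Ioo (-Real.pi) Real.pi,
    Complex.exp (((j:ℂ) - k) * Complex.I * θ) = if j = k then (2 * Real.pi : ℂ) else 0 := by
  rw [← integral_Ioc_eq_integral_Ioo, ← intervalIntegral.integral_of_le (by linarith [Real.pi_pos])]
  split_ifs with h
  · subst h
    simp
    ring
  · have hc : ((j:ℂ) - k) * Complex.I ≠ 0 := by
      refine mul_ne_zero (sub_ne_zero.2 (by exact_mod_cast h)) Complex.I_ne_zero
    rw [integral_exp_mul_complex hc]
    have : Complex.exp (((j:ℂ) - k) * Complex.I * (Real.pi : ℝ)) = Complex.exp (((j:ℂ) - k) * Complex.I * (-Real.pi : ℝ)) := by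
      rw [Complex.exp_eq_exp_iff_exists_int]
      refine ⟨(j:ℤ) - k, ?_⟩
      push_cast; ring
    rw [this]; simp

lemma rad_int (n : ℕ) (ρ : ℝ) (hρ : 0 < ρ) : ∫ r in Set.Ioi (0:ℝ),
    (Set.Iio ρ).indicator (fun r : ℝ => (r:ℂ)^n) r = (ρ:ℂ)^(n+1)/(n+1) := by
  rw [setIntegral_indicator measurableSet_Iio, Set.Ioi_inter_Iio, ← integral_Ioc_eq_integral_Ioo,
    ← intervalIntegral.integral_of_le hρ.le]
  have : ∫ x in (0:ℝ)..ρ, (x:ℂ)^n = ((∫ x in (0:ℝ)..ρ, x^n : ℝ) : ℂ) := by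
    rw [← intervalIntegral.integral_ofReal]; simp
  rw [this, integral_pow]
  push_cast; simp

lemma mono_int (j k : ℕ) (ρ : ℝ) (hρ : 0 < ρ) :
    ∫ z in Metric.ball (0:ℂ) ρ, z ^ j * (starRingEnd ℂ z) ^ k =
      if j = k then (Real.pi * ρ ^ (2 * (j+1)) / (j+1) : ℂ) else 0 := by
  rw [← integral_indicator Metric.isOpen_ball.measurableSet, ← Complex.integral_comp_polarCoord_symm]
  have h1 : ∀ p ∈ polarCoord.target, p.1 • (Metric.ball (0:ℂ) ρ).indicator
      (fun z => z ^ j * (starRingEnd ℂ z) ^ k) (Complex.polarCoord.symm p) =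
      (Set.Iio ρ).indicator (fun r : ℝ => (r:ℂ)^(j+k+1)) p.1 *
        Complex.exp (((j:ℂ) - k) * Complex.I * (p.2:ℝ)) := by
    intro p hp
    rw [polarCoord_target] at hp
    have hp0 : 0 < p.1 := hp.1
    have e1 : Complex.polarCoord.symm p = p.1 * Complex.exp (p.2 * Complex.I) := by
      rw [Complex.polarCoord_symm_apply, Complex.exp_mul_I]; simp
    have hn : Complex.polarCoord.symm p ∈ Metric.ball (0:ℂ) ρ ↔ p.1 ∈ Set.Iio ρ := by
      rw [mem_ball_zero_iff, Complex.norm_polarCoord_symm, abs_of_pos hp0]; rfl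
    by_cases hm : p.1 ∈ Set.Iio ρ
    · rw [Set.indicator_of_mem (hn.2 hm), Set.indicator_of_mem hm, e1]
      simp only [map_mul, Complex.conj_ofReal, ← Complex.exp_conj, Complex.conj_I, mul_pow,
        ← Complex.exp_nat_mul, Complex.real_smul]
      rw [show ((j:ℂ) - k) * Complex.I * (p.2:ℝ) = j * (p.2 * Complex.I) + k * (p.2 * -Complex.I) by ring,
        Complex.exp_add]
      ring
    · rw [Set.indicator_of_notMem (fun h => hm (hn.1 h)), Set.indicator_of_notMem hm]; simp
  rw [setIntegral_congr_fun polarCoord.open_target.measurableSet h1, polarCoord_target]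
  rw [Measure.volume_eq_prod, setIntegral_prod_mul (fun r : ℝ => (Set.Iio ρ).indicator (fun r : ℝ => (r:ℂ)^(j+k+1)) r)
    (fun t : ℝ => Complex.exp (((j:ℂ) - k) * Complex.I * t)), ang_int, rad_int _ _ hρ]
  split_ifs with h
  · subst h
    have : (j:ℂ)+1 ≠ 0 := by exact_mod_cast Nat.succ_ne_zero j
    have h2 : ((j + j + 1 : ℕ):ℂ) + 1 = 2 * (j+1) := by push_cast; ring
    rw [h2]
    field_simp
    ring
  · simp

lemma intble (j k : ℕ) (ρ : ℝ) : IntegrableOn (fun z : ℂ => z ^ j * (starRingEnd ℂ z) ^ k) (Metric.ball (0:ℂ) ρ) := by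
  have : Continuous (fun z : ℂ => z ^ j * (starRingEnd ℂ z) ^ k) := by fun_prop
  exact (this.continuousOn.integrableOn_compact (isCompact_closedBall 0 ρ)).mono_set Metric.ball_subset_closedBall

noncomputable def zz (x : EuclideanSpace ℝ (Fin 2)) : ℂ := (x 0 : ℂ) + (x 1 : ℂ) * Complex.I

noncomputable def zL : EuclideanSpace ℝ (Fin 2) →L[ℝ] ℂ :=
  (Complex.orthonormalBasisOneI.repr.symm : EuclideanSpace ℝ (Fin 2) →L[ℝ] ℂ)

lemma zL_apply (x : EuclideanSpace ℝ (Fin 2)) : zL x = zz x := by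
  simp [zL, zz, ← OrthonormalBasis.sum_repr_symm]

lemma transfer (ρ : ℝ) (g : ℂ → ℝ) :
    ∫ x in Metric.ball (0 : EuclideanSpace ℝ (Fin 2)) ρ, g (zz x) = ∫ z in Metric.ball (0:ℂ) ρ, g z := by
  have e := Complex.orthonormalBasisOneI.repr.symm
  have h := (Complex.orthonormalBasisOneI.repr.symm).measurePreserving.setIntegral_preimage_emb
    (Complex.orthonormalBasisOneI.repr.symm).toHomeomorph.measurableEmbedding g (Metric.ball 0 ρ)
  rw [← h, LinearIsometryEquiv.preimage_ball]
  simp only [map_zero]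
  simp only [← zL_apply]
  rfl

lemma fder (m N : ℕ) (a b : ℕ → EuclideanSpace ℝ (Fin m))
    (u : EuclideanSpace ℝ (Fin 2) → EuclideanSpace ℝ (Fin m))
    (hu : ∀ x : EuclideanSpace ℝ (Fin 2), u x = a 0 + ∑ n ∈ Finset.Icc 1 N,
        (((zz x) ^ n).re • a n + ((zz x) ^ n).im • b n)) (x v : EuclideanSpace ℝ (Fin 2)) :
    fderiv ℝ u x v = ∑ n ∈ Finset.Icc 1 N,
      ((n * (zz x) ^ (n-1) * zz v).re • a n + (n * (zz x) ^ (n-1) * zz v).im • b n) := by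
  have h0 : HasFDerivAt zz zL x := by
    have := zL.hasFDerivAt (x := x)
    rwa [show (⇑zL) = zz from funext zL_apply] at this
  have hp : ∀ n : ℕ, HasFDerivAt (fun x => (zz x)^n) ((n * (zz x)^(n-1)) • zL) x := by
    intro n
    have := h0.pow n
    simpa only [nsmul_eq_mul] using this
  have hd : HasFDerivAt u (∑ n ∈ Finset.Icc 1 N,
     (((Complex.reCLM.comp ((n * (zz x)^(n-1)) • zL)).smulRight (a n)) +
      ((Complex.imCLM.comp ((n * (zz x)^(n-1)) • zL)).smulRight (b n)))) x := by
    rw [show u = _ from funext hu]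
    refine HasFDerivAt.const_add _ (HasFDerivAt.fun_sum fun n _ => HasFDerivAt.add ?_ ?_)
    · exact (Complex.reCLM.hasFDerivAt.comp x (hp n)).smul_const (a n)
    · exact (Complex.imCLM.hasFDerivAt.comp x (hp n)).smul_const (b n)
  rw [hd.fderiv]
  simp [zL_apply]

open scoped RealInnerProductSpace in
lemma pointwise (m N : ℕ) (a b : ℕ → EuclideanSpace ℝ (Fin m)) (z : ℂ) :
    ‖∑ n ∈ Finset.Icc 1 N, ((n * z ^ (n-1) * 1).re • a n + (n * z ^ (n-1) * 1).im • b n)‖^2 +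
    ‖∑ n ∈ Finset.Icc 1 N, ((n * z ^ (n-1) * Complex.I).re • a n + (n * z ^ (n-1) * Complex.I).im • b n)‖^2
    = ∑ n ∈ Finset.Icc 1 N, ∑ k ∈ Finset.Icc 1 N,
      ((z^(n-1) * (starRingEnd ℂ z)^(k-1)).re * (n * k * (⟪a n, a k⟫ + ⟪b n, b k⟫)) +
       (z^(n-1) * (starRingEnd ℂ z)^(k-1)).im * (n * k * (⟪b n, a k⟫ - ⟪a n, b k⟫))) := by
  rw [← real_inner_self_eq_norm_sq, ← real_inner_self_eq_norm_sq]
  simp only [sum_inner, inner_sum, ← Finset.sum_add_distrib]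
  rw [Finset.sum_comm]
  refine Finset.sum_congr rfl fun n _ => Finset.sum_congr rfl fun k _ => ?_
  simp only [← map_pow, inner_add_left, inner_add_right, real_inner_smul_left, real_inner_smul_right]
  generalize z^(n-1) = p
  generalize z^(k-1) = q
  simp only [Complex.mul_re, Complex.mul_im, Complex.natCast_re, Complex.natCast_im, Complex.I_re,
    Complex.I_im, Complex.conj_re, Complex.conj_im, Complex.one_re, Complex.one_im]
  ring

theorem stmt_9 (m N : ℕ) (hm : 1 ≤ m) (a b : ℕ → EuclideanSpace ℝ (Fin m))
    (ρ : ℝ) (hρ : 0 < ρ)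
    (u : EuclideanSpace ℝ (Fin 2) → EuclideanSpace ℝ (Fin m))
    (hu : ∀ x : EuclideanSpace ℝ (Fin 2), u x = a 0 + ∑ n ∈ Finset.Icc 1 N,
        ((((x 0 : ℂ) + (x 1 : ℂ) * Complex.I) ^ n).re • a n +
          (((x 0 : ℂ) + (x 1 : ℂ) * Complex.I) ^ n).im • b n)) :
    ∫ x in Metric.ball (0 : EuclideanSpace ℝ (Fin 2)) ρ,
        ∑ i : Fin 2, ‖fderiv ℝ u x (EuclideanSpace.single i 1)‖ ^ 2 =
      Real.pi * ∑ n ∈ Finset.Icc 1 N, (n : ℝ) * ρ ^ (2 * n) * (‖a n‖ ^ 2 + ‖b n‖ ^ 2) := by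
  have z0 : zz (EuclideanSpace.single 0 1) = 1 := by simp [zz]
  have z1 : zz (EuclideanSpace.single 1 1) = Complex.I := by simp [zz]
  simp only [Fin.sum_univ_two, fder m N a b u hu, z0, z1, pointwise]
  rw [transfer ρ (fun z => ∑ n ∈ Finset.Icc 1 N, ∑ k ∈ Finset.Icc 1 N,
      ((z^(n-1) * (starRingEnd ℂ z)^(k-1)).re * (n * k * (inner ℝ (a n) (a k) + inner ℝ (b n) (b k))) +
       (z^(n-1) * (starRingEnd ℂ z)^(k-1)).im * (n * k * (inner ℝ (b n) (a k) - inner ℝ (a n) (b k)))))]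
  have ire := fun j k : ℕ => (intble j k ρ).re
  have iim := fun j k : ℕ => (intble j k ρ).im
  simp only [RCLike.re_eq_complex_re, RCLike.im_eq_complex_im] at ire iim
  have vre : ∀ j k : ℕ, ∫ z in Metric.ball (0:ℂ) ρ, (z ^ j * (starRingEnd ℂ z) ^ k).re =
      if j = k then Real.pi * ρ ^ (2 * (j+1)) / (j+1) else 0 := by
    intro j k
    have := integral_re (intble j k ρ)
    simp only [RCLike.re_eq_complex_re] at this
    rw [this, mono_int j k ρ hρ]
    split_ifs
    · norm_cast
    · simp
  have vim : ∀ j k : ℕ, ∫ z in Metric.ball (0:ℂ) ρ, (z ^ j * (starRingEnd ℂ z) ^ k).im = 0 := by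
    intro j k
    have := integral_im (intble j k ρ)
    simp only [RCLike.im_eq_complex_im] at this
    rw [this, mono_int j k ρ hρ]
    split_ifs
    · norm_cast
    · simp
  have iall : ∀ n k : ℕ, Integrable (fun z : ℂ => 
      ((z^(n-1) * (starRingEnd ℂ z)^(k-1)).re * (n * k * (inner ℝ (a n) (a k) + inner ℝ (b n) (b k))) +
       (z^(n-1) * (starRingEnd ℂ z)^(k-1)).im * (n * k * (inner ℝ (b n) (a k) - inner ℝ (a n) (b k)))))
       (volume.restrict (Metric.ball 0 ρ)) := fun n k =>
    ((ire _ _).mul_const _).add ((iim _ _).mul_const _)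
  rw [integral_finsetSum _ (fun n _ => integrable_finsetSum _ fun k _ => iall n k), Finset.mul_sum]
  refine Finset.sum_congr rfl fun n hn => ?_
  have hn1 := (Finset.mem_Icc.1 hn).1
  rw [integral_finsetSum _ (fun k _ => iall n k), Finset.sum_eq_single n]
  · rw [integral_add ((ire _ _).mul_const _) ((iim _ _).mul_const _), integral_mul_const,
      integral_mul_const, vre, vim, if_pos rfl, real_inner_self_eq_norm_sq, real_inner_self_eq_norm_sq]
    obtain ⟨l, rfl⟩ : ∃ l, n = l + 1 := ⟨n - 1, by omega⟩
    have : (l:ℝ) + 1 ≠ 0 := by positivity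
    simp only [Nat.add_sub_cancel]
    push_cast
    field_simp
    ring
  · intro k hk hne
    have hk1 := (Finset.mem_Icc.1 hk).1
    rw [integral_add ((ire _ _).mul_const _) ((iim _ _).mul_const _), integral_mul_const,
      integral_mul_const, vre, vim, if_neg (by omega)]
    simp
  · exact fun h => absurd hn h
end

section
/- Let m ≥ 1, ρ > 0, q ∈ ℝᵐ, and let u : ℝ² → ℝᵐ be harmonic on an open set containing the closed disk of radius ρ centered at the origin. Then ∫_{D_ρ} ‖u(x) − q‖² dx ≤ (ρ²/2) ∫₀^{2π} ‖u(ρ cos θ, ρ sin θ) − q‖² dθ. -/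
open MeasureTheory

lemma pk_cont {r R : ℝ} (hr : 0 ≤ r) (hrR : r < R) :
    Continuous (fun p : ℝ × ℝ => poissonKernel 0 (circleMap 0 r p.1) (circleMap 0 R p.2)) := by
  simp only [poissonKernel_def, sub_zero]
  have h1 : ∀ s : ℝ, Continuous (circleMap 0 s) := fun s => continuous_circleMap 0 s
  have h2 : Continuous (fun p : ℝ × ℝ => circleMap 0 r p.1) := (h1 r).comp continuous_fst
  have h3 : Continuous (fun p : ℝ × ℝ => circleMap 0 R p.2) := (h1 R).comp continuous_snd
  refine ((h3.norm.pow 2).sub (h2.norm.pow 2)).div ((h3.sub h2).norm.pow 2) ?_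
  intro p hp
  have h4 : circleMap 0 R p.2 - circleMap 0 r p.1 = 0 := by simpa using hp
  have h5 := congrArg norm (sub_eq_zero.1 h4)
  rw [norm_circleMap_zero, norm_circleMap_zero, abs_of_nonneg hr, abs_of_pos (hr.trans_lt hrR)] at h5
  linarith

lemma pk_symm (r R φ θ : ℝ) :
    poissonKernel 0 (circleMap 0 r φ) (circleMap 0 R θ) =
    poissonKernel 0 (circleMap 0 r θ) (circleMap 0 R φ) := by
  simp only [poissonKernel_def, sub_zero, norm_circleMap_zero]
  congr 1
  rw [← Complex.normSq_eq_norm_sq, ← Complex.normSq_eq_norm_sq]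
  simp only [circleMap, zero_add, Complex.normSq_apply, Complex.sub_re, Complex.sub_im,
    Complex.re_ofReal_mul, Complex.im_ofReal_mul, Complex.exp_ofReal_mul_I_re,
    Complex.exp_ofReal_mul_I_im]
  have h1 := Real.sin_sq_add_cos_sq φ
  have h2 := Real.sin_sq_add_cos_sq θ
  linear_combination (R ^ 2 - r ^ 2) * (h2 - h1)

lemma poisson_int {f : ℂ → ℝ} {R : ℝ} {w : ℂ}
    (hf : InnerProductSpace.HarmonicOnNhd f (Metric.closedBall 0 R)) (hw : w ∈ Metric.ball 0 R) :
    ∫ θ in (0 : ℝ)..2 * Real.pi, poissonKernel 0 w (circleMap 0 R θ) * f (circleMap 0 R θ)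
      = 2 * Real.pi * f w := by
  have h := hf.circleAverage_poissonKernel_smul hw
  rw [Real.circleAverage_def] at h
  rw [← h]
  have : (2 * Real.pi) ≠ 0 := by positivity
  simp only [smul_eq_mul, Pi.smul_apply']
  field_simp


lemma kernel_mono (T : ℝ) (hT : 0 < T) (P : ℝ → ℝ → ℝ) (g h : ℝ → ℝ)
    (hP : Continuous (fun p : ℝ × ℝ => P p.1 p.2)) (hpos : ∀ φ θ, 0 ≤ P φ θ)
    (hsymm : ∀ φ θ, P φ θ = P θ φ) (hone : ∀ φ, ∫ θ in (0 : ℝ)..T, P φ θ = T)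
    (hg : Continuous g) (hh : Continuous h)
    (hgh : ∀ φ, ∫ θ in (0 : ℝ)..T, P φ θ * h θ = T * g φ) :
    ∫ θ in (0 : ℝ)..T, g θ ^ 2 ≤ ∫ θ in (0 : ℝ)..T, h θ ^ 2 := by
  have hP1 : ∀ φ, Continuous fun θ => P φ θ := fun φ => by fun_prop
  have hQ : Continuous (fun p : ℝ × ℝ => P p.1 p.2 * h p.2 ^ 2) := by fun_prop
  have hJ : ∀ φ, T * g φ ^ 2 ≤ ∫ θ in (0 : ℝ)..T, P φ θ * h θ ^ 2 := by
    intro φ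
    set a := g φ with ha
    have h0 : 0 ≤ ∫ θ in (0 : ℝ)..T, P φ θ * (h θ - a) ^ 2 :=
      intervalIntegral.integral_nonneg hT.le fun θ _ => mul_nonneg (hpos φ θ) (sq_nonneg _)
    have he : ∀ θ, P φ θ * (h θ - a) ^ 2 =
        P φ θ * h θ ^ 2 - 2 * a * (P φ θ * h θ) + a ^ 2 * P φ θ := fun θ => by ring
    simp only [he] at h0
    have i1 : IntervalIntegrable (fun θ => P φ θ * h θ ^ 2) volume 0 T :=
      Continuous.intervalIntegrable (by fun_prop) _ _
    have i2 : IntervalIntegrable (fun θ => 2 * a * (P φ θ * h θ)) volume 0 T :=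
      Continuous.intervalIntegrable (by fun_prop) _ _
    have i3 : IntervalIntegrable (fun θ => a ^ 2 * P φ θ) volume 0 T :=
      Continuous.intervalIntegrable (by fun_prop) _ _
    rw [intervalIntegral.integral_add (i1.sub i2) i3, intervalIntegral.integral_sub i1 i2,
      intervalIntegral.integral_const_mul, intervalIntegral.integral_const_mul, hone,
      hgh φ, ← ha] at h0
    linarith
  have key : ∫ φ in (0 : ℝ)..T, T * g φ ^ 2 ≤
      ∫ φ in (0 : ℝ)..T, ∫ θ in (0 : ℝ)..T, P φ θ * h θ ^ 2 := by
    apply intervalIntegral.integral_mono_on hT.le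
    · exact Continuous.intervalIntegrable (by fun_prop) _ _
    · exact (intervalIntegral.continuous_parametric_intervalIntegral_of_continuous'
        (f := fun φ θ => P φ θ * h θ ^ 2) hQ _ _).intervalIntegrable _ _
    · exact fun φ _ => hJ φ
  rw [intervalIntegral_intervalIntegral_swap] at key
  · simp only [intervalIntegral.integral_mul_const, intervalIntegral.integral_const_mul] at key
    have h2 : ∀ θ, ∫ φ in (0 : ℝ)..T, P φ θ = T := by
      intro θ
      simp only [fun φ => hsymm φ θ]
      exact hone θ
    simp only [h2, intervalIntegral.integral_const_mul] at key
    exact le_of_mul_le_mul_left key hT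
  · exact (hQ.continuousOn.integrableOn_compact
      (isCompact_uIcc.prod isCompact_uIcc)).mono_set
      (Set.prod_mono Set.uIoc_subset_uIcc Set.uIoc_subset_uIcc)

lemma circ_mono {f : ℂ → ℝ} {r R : ℝ} (hr : 0 ≤ r) (hrR : r < R)
    (hf : InnerProductSpace.HarmonicOnNhd f (Metric.closedBall 0 R)) :
    ∫ θ in (0 : ℝ)..2 * Real.pi, f (circleMap 0 r θ) ^ 2 ≤
    ∫ θ in (0 : ℝ)..2 * Real.pi, f (circleMap 0 R θ) ^ 2 := by
  have hR : 0 < R := hr.trans_lt hrR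
  have hc : ∀ s, 0 ≤ s → s ≤ R → Continuous (fun θ => f (circleMap 0 s θ)) := by
    intro s hs hsR
    refine hf.continuousOn.comp_continuous (continuous_circleMap 0 s) fun θ => ?_
    simp [abs_of_nonneg hs, hsR]
  have hw : ∀ φ, circleMap 0 r φ ∈ Metric.ball (0 : ℂ) R := by
    intro φ; simp [abs_of_nonneg hr, hrR]
  refine kernel_mono (2 * Real.pi) (by positivity)
    (fun φ θ => poissonKernel 0 (circleMap 0 r φ) (circleMap 0 R θ))
    (fun θ => f (circleMap 0 r θ)) (fun θ => f (circleMap 0 R θ))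
    (pk_cont hr hrR) ?_ (pk_symm r R) ?_ (hc r hr hrR.le) (hc R hR.le le_rfl) ?_
  · intro φ θ
    simp only [poissonKernel_def, sub_zero, norm_circleMap_zero, sq_abs]
    apply div_nonneg _ (by positivity)
    nlinarith
  · intro φ
    have := poisson_int (f := fun _ => (1 : ℝ)) (InnerProductSpace.harmonicOnNhd_const 1) (hw φ)
    simpa only [mul_one] using this
  · intro φ
    exact poisson_int hf (hw φ)

lemma ball_le {g : ℂ → ℝ} {ρ : ℝ} (hρ : 0 < ρ) (hg : ContinuousOn g (Metric.closedBall 0 ρ))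
    (C : ℝ) (hC : ∀ r, 0 < r → r < ρ → ∫ θ in (0 : ℝ)..2 * Real.pi, g (circleMap 0 r θ) ≤ C) :
    ∫ z in Metric.ball 0 ρ, g z ≤ ρ ^ 2 / 2 * C := by
  have hpi := Real.pi_pos
  rw [← integral_indicator measurableSet_ball, ← Complex.integral_comp_polarCoord_symm]
  have hcm : ∀ p : ℝ × ℝ, Complex.polarCoord.symm p = circleMap 0 p.1 p.2 := by
    intro p
    rw [Complex.polarCoord_symm_apply, circleMap, zero_add, Complex.exp_mul_I]
    simp
  have hcont : ContinuousOn (fun p : ℝ × ℝ => p.1 * g (circleMap 0 p.1 p.2))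
      (Set.Icc 0 ρ ×ˢ Set.Icc (-Real.pi) Real.pi) := by
    refine continuousOn_fst.mul (hg.comp (by fun_prop [circleMap]) ?_)
    rintro p ⟨⟨h1, h2⟩, _⟩
    simp [abs_of_nonneg h1, h2]
  have hint := (hcont.integrableOn_compact (μ := volume)
    (isCompact_Icc.prod isCompact_Icc)).mono_set
    (Set.prod_mono Set.Ioo_subset_Icc_self Set.Ioo_subset_Icc_self)
  have e1 : ∫ p in polarCoord.target, p.1 • (Metric.ball 0 ρ).indicator g
      (Complex.polarCoord.symm p) =
      ∫ p in Set.Ioo 0 ρ ×ˢ Set.Ioo (-Real.pi) Real.pi, p.1 * g (circleMap 0 p.1 p.2) := by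
    rw [← integral_indicator polarCoord.open_target.measurableSet,
      ← integral_indicator (measurableSet_Ioo.prod measurableSet_Ioo)]
    congr 1
    ext p
    simp only [hcm, Set.indicator, polarCoord_target, Set.mem_prod, Set.mem_Ioi, Set.mem_Ioo,
      mem_ball_zero_iff, norm_circleMap_zero, smul_eq_mul]
    by_cases h : 0 < p.1
    · simp [h, abs_of_pos h]
      grind
    · simp [h]
  rw [e1, Measure.volume_eq_prod, setIntegral_prod _ (by rwa [← Measure.volume_eq_prod])]
  have e2 : ∀ r : ℝ, ∫ θ in Set.Ioo (-Real.pi) Real.pi, r * g (circleMap 0 r θ) =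
      r * ∫ θ in (0 : ℝ)..2 * Real.pi, g (circleMap 0 r θ) := by
    intro r
    rw [integral_const_mul, ← integral_Ioc_eq_integral_Ioo,
      ← intervalIntegral.integral_of_le (by linarith)]
    congr 1
    have hper : Function.Periodic (fun θ => g (circleMap 0 r θ)) (2 * Real.pi) :=
      (periodic_circleMap 0 r).comp g
    have := hper.intervalIntegral_add_eq (-Real.pi) 0
    rw [zero_add] at this
    rw [← this]; congr 1; ring
  have hint2 : IntegrableOn (fun r => ∫ θ in Set.Ioo (-Real.pi) Real.pi, r * g (circleMap 0 r θ))
      (Set.Ioo 0 ρ) := by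
    have := hint
    rw [IntegrableOn, Measure.volume_eq_prod, ← Measure.prod_restrict] at this
    exact this.integral_prod_left
  calc _ ≤ ∫ r in Set.Ioo 0 ρ, r * C := by
        apply setIntegral_mono_on hint2 _ measurableSet_Ioo
        · intro r hr
          simp only [e2]
          exact mul_le_mul_of_nonneg_left (hC r hr.1 hr.2) hr.1.le
        · exact ((by fun_prop : Continuous fun r : ℝ => r * C).continuousOn.integrableOn_compact
            isCompact_Icc).mono_set Set.Ioo_subset_Icc_self
    _ = ρ ^ 2 / 2 * C := by
        rw [integral_mul_const, ← integral_Ioc_eq_integral_Ioo,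
          ← intervalIntegral.integral_of_le hρ.le, integral_id]
        ring

lemma harm_comp {m : ℕ} {U : Set (EuclideanSpace ℝ (Fin 2))} (hU : IsOpen U)
    (u : EuclideanSpace ℝ (Fin 2) → EuclideanSpace ℝ (Fin m))
    (hu : ContDiffOn ℝ 2 u U)
    (hharm : ∀ x ∈ U,
      fderiv ℝ (fun y => fderiv ℝ u y (EuclideanSpace.single 0 1)) x
          (EuclideanSpace.single 0 1) +
        fderiv ℝ (fun y => fderiv ℝ u y (EuclideanSpace.single 1 1)) x
          (EuclideanSpace.single 1 1) = 0) (z : ℂ)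
    (hz : Complex.orthonormalBasisOneI.repr z ∈ U) :
    InnerProductSpace.HarmonicAt (fun z => u (Complex.orthonormalBasisOneI.repr z)) z := by
  set e := Complex.orthonormalBasisOneI.repr with he
  set L : ℂ ≃L[ℝ] EuclideanSpace ℝ (Fin 2) := e.toContinuousLinearEquiv with hL
  have hpt : ∀ z, e z ∈ U → ContDiffAt ℝ 2 (fun z => u (e z)) z ∧
      Laplacian.laplacian (fun z => u (e z)) z = 0 := by
    intro z hz
    have hcu : ContDiffAt ℝ 2 u (e z) := hu.contDiffAt (hU.mem_nhds hz)
    refine ⟨hcu.comp z L.contDiff.contDiffAt, ?_⟩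
    rw [InnerProductSpace.laplacian_eq_iteratedFDeriv_complexPlane]
    have hcomp : ∀ v, iteratedFDeriv ℝ 2 (fun z => u (e z)) z ![v, v] =
        iteratedFDeriv ℝ 2 u (e z) ![e v, e v] := by
      intro v
      have h := L.iteratedFDerivWithin_comp_right u (s := Set.univ) uniqueDiffOn_univ
        (x := z) (Set.mem_univ _) 2
      simp only [Set.preimage_univ, iteratedFDerivWithin_univ] at h
      have h' := congrArg (fun M => M ![v, v]) h
      simp only [ContinuousMultilinearMap.compContinuousLinearMap_apply] at h'
      refine h'.trans ?_
      change iteratedFDeriv ℝ 2 u (e z) _ = _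
      congr 1
      ext k
      fin_cases k <;> rfl
    have hd : ∀ v, iteratedFDeriv ℝ 2 u (e z) ![v, v] =
        fderiv ℝ (fun y => fderiv ℝ u y v) (e z) v := by
      intro v
      rw [iteratedFDeriv_two_apply]
      have hdd : DifferentiableAt ℝ (fderiv ℝ u) (e z) :=
        (hcu.fderiv_right (m := 1) (by norm_num)).differentiableAt (by norm_num)
      rw [fderiv_clm_apply hdd (differentiableAt_const v)]
      simp
    simp only [hcomp, hd]
    have h1 : e 1 = EuclideanSpace.single 0 1 := by
      rw [he]; 
      have := Complex.orthonormalBasisOneI.repr_self 0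
      simpa using this
    have h2 : e Complex.I = EuclideanSpace.single 1 1 := by
      have := Complex.orthonormalBasisOneI.repr_self 1
      simpa using this
    rw [h1, h2]
    exact hharm _ hz
  refine ⟨(hpt z hz).1, ?_⟩
  filter_upwards [(hU.preimage e.continuous).mem_nhds hz] with w hw
  exact (hpt w hw).2

lemma e_circle (r θ : ℝ) : Complex.orthonormalBasisOneI.repr (circleMap 0 r θ) = circlePt r θ := by
  ext i
  fin_cases i <;> simp [circlePt, circleMap, Complex.exp_ofReal_mul_I_re, Complex.exp_ofReal_mul_I_im]

theorem stmt_11 (m : ℕ) (hm : 1 ≤ m) (ρ : ℝ) (hρ : 0 < ρ) (q : EuclideanSpace ℝ (Fin m))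
    (U : Set (EuclideanSpace ℝ (Fin 2))) (hU : IsOpen U)
    (hUball : Metric.closedBall (0 : EuclideanSpace ℝ (Fin 2)) ρ ⊆ U)
    (u : EuclideanSpace ℝ (Fin 2) → EuclideanSpace ℝ (Fin m))
    (hu : ContDiffOn ℝ 2 u U)
    (hharm : ∀ x ∈ U,
      fderiv ℝ (fun y => fderiv ℝ u y (EuclideanSpace.single 0 1)) x
          (EuclideanSpace.single 0 1) +
        fderiv ℝ (fun y => fderiv ℝ u y (EuclideanSpace.single 1 1)) x
          (EuclideanSpace.single 1 1) = 0) :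
    ∫ x in Metric.ball (0 : EuclideanSpace ℝ (Fin 2)) ρ, ‖u x - q‖ ^ 2 ≤
      ρ ^ 2 / 2 * ∫ θ in (0 : ℝ)..(2 * Real.pi), ‖u (circlePt ρ θ) - q‖ ^ 2 := by
  set e := Complex.orthonormalBasisOneI.repr with he
  have hball : ∀ z ∈ Metric.closedBall (0 : ℂ) ρ, e z ∈ U := by
    intro z hz
    apply hUball
    simpa using hz
  have hharm' : InnerProductSpace.HarmonicOnNhd (fun z => u (e z)) (Metric.closedBall 0 ρ) :=
    fun z hz => harm_comp hU u hu hharm z (hball z hz)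
  have hi : ∀ i : Fin m, InnerProductSpace.HarmonicOnNhd (fun z => u (e z) i - q i)
      (Metric.closedBall 0 ρ) := fun i =>
    (hharm'.comp_CLM (EuclideanSpace.proj (𝕜 := ℝ) i)).sub
      (InnerProductSpace.harmonicOnNhd_const (q i))
  have hnorm : ∀ z, ‖u (e z) - q‖ ^ 2 = ∑ i, (u (e z) i - q i) ^ 2 := by
    intro z
    rw [EuclideanSpace.real_norm_sq_eq]
    rfl
  have hpre : e ⁻¹' Metric.ball (0 : EuclideanSpace ℝ (Fin 2)) ρ = Metric.ball (0 : ℂ) ρ := by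
    ext z; simp
  have h1 := e.measurePreserving.setIntegral_preimage_emb
    e.toHomeomorph.measurableEmbedding (fun x => ‖u x - q‖ ^ 2) (Metric.ball 0 ρ)
  rw [hpre] at h1
  rw [← h1]
  apply ball_le hρ
  · exact (hharm'.continuousOn.sub continuousOn_const).norm.pow 2
  · intro r hr hrρ
    have hc : ∀ s, 0 ≤ s → s ≤ ρ → ∀ i ∈ (Finset.univ : Finset (Fin m)),
        IntervalIntegrable (fun θ => (u (e (circleMap 0 s θ)) i - q i) ^ 2) volume
          0 (2 * Real.pi) := by
      intro s hs hsR i _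
      refine Continuous.intervalIntegrable (Continuous.pow ?_ 2) _ _
      refine (hi i).continuousOn.comp_continuous (continuous_circleMap 0 s) fun θ => ?_
      simp [abs_of_nonneg hs, hsR]
    simp only [← e_circle, ← he, hnorm]
    rw [intervalIntegral.integral_finsetSum (hc r hr.le hrρ.le),
      intervalIntegral.integral_finsetSum (hc ρ hρ.le le_rfl)]
    exact Finset.sum_le_sum fun i _ => circ_mono hr.le hrρ (hi i)
end

section
/- Let ν₁, ν₂, p ∈ ℝ³ with ‖ν₁‖ = ‖ν₂‖ = ‖p‖ = 1 and ⟨p, ν₂⟩ = 0. Then there exists q ∈ ℝ³ with ‖q‖ = 1, ⟨q, ν₁⟩ = 0, and ‖p − q‖ ≤ 2 ‖ν₁ − ν₂‖. -/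
open scoped RealInnerProductSpace

theorem stmt_13 (ν₁ ν₂ p : EuclideanSpace ℝ (Fin 3))
    (hν₁ : ‖ν₁‖ = 1) (hν₂ : ‖ν₂‖ = 1) (hp : ‖p‖ = 1) (hpν₂ : ⟪p, ν₂⟫ = 0) :
    ∃ q : EuclideanSpace ℝ (Fin 3), ‖q‖ = 1 ∧ ⟪q, ν₁⟫ = 0 ∧
      ‖p - q‖ ≤ 2 * ‖ν₁ - ν₂‖ := by
  obtain ⟨a, ha⟩ : ∃ a : ℝ, a = ⟪p, ν₁⟫ := ⟨_, rfl⟩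
  have had : |a| ≤ ‖ν₁ - ν₂‖ := by
    have h := abs_real_inner_le_norm p (ν₁ - ν₂)
    rw [inner_sub_right, hpν₂, hp, ← ha] at h
    simpa using h
  have h11 : ⟪ν₁, ν₁⟫ = 1 := by rw [real_inner_self_eq_norm_sq, hν₁]; norm_num
  have hpp : ⟪p, p⟫ = 1 := by rw [real_inner_self_eq_norm_sq, hp]; norm_num
  by_cases h0 : p - a • ν₁ = 0
  · have hpa : p = a • ν₁ := sub_eq_zero.mp h0
    have ha1 : |a| = 1 := by
      have := congrArg norm hpa
      rw [norm_smul, hp, hν₁] at this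
      simpa using this.symm
    refine ⟨ν₂, hν₂, ?_, ?_⟩
    · rw [hpa, real_inner_smul_left] at hpν₂
      rw [real_inner_comm]
      rcases mul_eq_zero.mp hpν₂ with h | h
      · rw [h] at ha1; norm_num at ha1
      · exact h
    · have := norm_sub_le p ν₂
      rw [hp, hν₂] at this
      linarith
  · obtain ⟨s, hs⟩ : ∃ s : ℝ, s = ‖p - a • ν₁‖ := ⟨_, rfl⟩
    have hs0 : 0 < s := by rw [hs]; exact norm_pos_iff.mpr h0
    have hs2 : s ^ 2 = 1 - a ^ 2 := by
      rw [hs, norm_sub_sq_real, real_inner_smul_right, ← ha, norm_smul, hp, hν₁, mul_one,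
        Real.norm_eq_abs, sq_abs]
      ring
    have hq : ‖s⁻¹ • (p - a • ν₁)‖ = 1 := by
      rw [norm_smul, ← hs, norm_inv, Real.norm_eq_abs, abs_of_pos hs0]
      exact inv_mul_cancel₀ hs0.ne'
    refine ⟨s⁻¹ • (p - a • ν₁), hq, ?_, ?_⟩
    · rw [real_inner_smul_left, inner_sub_left, real_inner_smul_left, h11, ← ha]
      ring
    · have hi : ⟪p, s⁻¹ • (p - a • ν₁)⟫ = s := by
        rw [real_inner_smul_right, inner_sub_right, real_inner_smul_right, hpp, ← ha]
        field_simp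
        linarith
      have hn : ‖p - s⁻¹ • (p - a • ν₁)‖ ^ 2 = 2 - 2 * s := by
        rw [norm_sub_sq_real, hi, hp, hq]; ring
      have hd := sq_le_sq' (by linarith [abs_nonneg a, norm_nonneg (ν₁ - ν₂)]) had
      rw [sq_abs] at hd
      refine (sq_le_sq₀ (norm_nonneg _) (by positivity)).mp ?_
      rw [hn]
      nlinarith [sq_nonneg a]
end

section
/- Let ν₁, ν₂ ∈ ℝ³ be unit vectors and let p ∈ ℝ³. For i = 1, 2 set p′ᵢ := p − ⟨p, νᵢ⟩ νᵢ, and assume ‖p′ᵢ‖ ≥ 1/2 for i = 1, 2. Then ‖ p′₁/‖p′₁‖ − p′₂/‖p′₂‖ ‖ ≤ 8 ‖p‖ ‖ν₁ − ν₂‖. -/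
open scoped RealInnerProductSpace

theorem stmt_14 (ν₁ ν₂ : EuclideanSpace ℝ (Fin 3)) (hν₁ : ‖ν₁‖ = 1) (hν₂ : ‖ν₂‖ = 1)
    (p : EuclideanSpace ℝ (Fin 3)) (p₁' p₂' : EuclideanSpace ℝ (Fin 3))
    (hp₁' : p₁' = p - ⟪p, ν₁⟫ • ν₁) (hp₂' : p₂' = p - ⟪p, ν₂⟫ • ν₂)
    (h₁ : 1 / 2 ≤ ‖p₁'‖) (h₂ : 1 / 2 ≤ ‖p₂'‖) :
    ‖‖p₁'‖⁻¹ • p₁' - ‖p₂'‖⁻¹ • p₂'‖ ≤ 8 * ‖p‖ * ‖ν₁ - ν₂‖ := by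
  have hd : ‖p₁' - p₂'‖ ≤ 2 * ‖p‖ * ‖ν₁ - ν₂‖ := by
    have e : p₁' - p₂' = -(⟪p, ν₁ - ν₂⟫ • ν₁ + ⟪p, ν₂⟫ • (ν₁ - ν₂)) := by
      rw [hp₁', hp₂', inner_sub_right]
      module
    rw [e, norm_neg]
    refine (norm_add_le _ _).trans ?_
    rw [norm_smul, norm_smul, hν₁]
    have a := norm_inner_le_norm (𝕜 := ℝ) p (ν₁ - ν₂)
    have b := norm_inner_le_norm (𝕜 := ℝ) p ν₂
    rw [hν₂] at b
    have c := mul_le_mul_of_nonneg_right b (norm_nonneg (ν₁ - ν₂))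
    linarith
  have ha : 0 < ‖p₁'‖ := by linarith
  have hb : 0 < ‖p₂'‖ := by linarith
  have e : ‖p₁'‖⁻¹ • p₁' - ‖p₂'‖⁻¹ • p₂'
      = ‖p₁'‖⁻¹ • ((p₁' - p₂') + (‖p₂'‖ - ‖p₁'‖) • (‖p₂'‖⁻¹ • p₂')) := by
    have hc : ‖p₂'‖⁻¹ = ‖p₁'‖⁻¹ - ‖p₁'‖⁻¹ * ((‖p₂'‖ - ‖p₁'‖) * ‖p₂'‖⁻¹) := by
      field_simp
      ring
    rw [smul_add, smul_sub, smul_smul, smul_smul]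
    nth_rewrite 1 [hc]
    module
  have hu : ‖‖p₂'‖⁻¹ • p₂'‖ = 1 := by
    rw [norm_smul, norm_inv, norm_norm, inv_mul_cancel₀ hb.ne']
  have hn : |‖p₂'‖ - ‖p₁'‖| ≤ ‖p₁' - p₂'‖ := by
    rw [norm_sub_rev]; exact abs_norm_sub_norm_le _ _
  have hi : ‖p₁'‖⁻¹ ≤ 2 := by
    rw [inv_le_comm₀ ha two_pos]; linarith
  rw [e, norm_smul, norm_inv, norm_norm]
  have ht := norm_add_le (p₁' - p₂') ((‖p₂'‖ - ‖p₁'‖) • (‖p₂'‖⁻¹ • p₂'))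
  rw [norm_smul _ (‖p₂'‖⁻¹ • p₂'), hu, Real.norm_eq_abs] at ht
  have := mul_le_mul_of_nonneg_right hi
    (norm_nonneg ((p₁' - p₂') + (‖p₂'‖ - ‖p₁'‖) • (‖p₂'‖⁻¹ • p₂')))
  linarith
end
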